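/- Let d ≥ 5 and let C be a clustering, with at least two clusters, of an n-element configuration in Z^d such that every cluster has at most 3 elements. There is a number c = c(d) > 0 such that for every x ∈ π(C), writing i for the index of the cluster of C containing x, H_{π(C)}(x) ≥ (1 − c·n·sep(C)^{2−d})·H_C(i,x). -/

import Mathlib

open MeasureTheory

namespace HATFormal

/-- Points of the lattice `ℤ^d`. -/
abbrev Pt (d : ℕ) := Fin d → ℤ

/-- The `2d` unit steps of the simple random walk on `ℤ^d`. -/
def Dir (d : ℕ) : Set (Pt d) :=
  {s | ∃ i : Fin d, s = Pi.single i 1 ∨ s = Pi.single i (-1)}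

/-- The position, after `t` steps, of the walk started at `x` with steps `s`. -/
def wpos (d : ℕ) (x : Pt d) {T : ℕ} (s : Fin T → Pt d) (t : ℕ) : Pt d :=
  x + ∑ i ∈ Finset.univ.filter (fun i : Fin T => (i : ℕ) < t), s i

/-- The probability of an event `P` of the first `T` steps of simple random walk on `ℤ^d`. -/
noncomputable def prob (d T : ℕ) (P : (Fin T → Pt d) → Prop) : ℝ :=
  (Nat.card {s : Fin T → Pt d // (∀ i, s i ∈ Dir d) ∧ P s} : ℝ) / ((2 * d : ℕ) : ℝ) ^ T

open Classical in
/-- `esc d A x = P_x(τ_A = ∞)` if `x ∈ A`, and `0` otherwise. -/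
noncomputable def esc (d : ℕ) (A : Set (Pt d)) (x : Pt d) : ℝ :=
  if x ∈ A then ⨅ T : ℕ, prob d T (fun s => ∀ t, 1 ≤ t → t ≤ T → wpos d x s t ∉ A) else 0

/-- The capacity of `A`. -/
noncomputable def capa (d : ℕ) (A : Set (Pt d)) : ℝ := ∑' x : A, esc d A (x : Pt d)

/-- The harmonic measure `H_A(x) = esc_A(x) / cap_A`. -/
noncomputable def harm (d : ℕ) (A : Set (Pt d)) (x : Pt d) : ℝ := esc d A x / capa d A

/-- `P_x(τ_W < ∞)`. -/
noncomputable def retProb (d : ℕ) (W : Set (Pt d)) (x : Pt d) : ℝ :=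
  ∑' t : ℕ, prob d t (fun s => 1 ≤ t ∧ wpos d x s t ∈ W ∧
    ∀ u, 1 ≤ u → u < t → wpos d x s u ∉ W)

/-- `P_x(τ_W < ∞ and S_{τ_W − 1} = y)`. -/
noncomputable def hitFrom (d : ℕ) (W : Set (Pt d)) (x y : Pt d) : ℝ :=
  ∑' t : ℕ, prob d t (fun s => 1 ≤ t ∧ wpos d x s t ∈ W ∧ wpos d x s (t - 1) = y ∧
    ∀ u, 1 ≤ u → u < t → wpos d x s u ∉ W)

/-- `P_x(τ_W < ∞ and S_{τ_W} ∈ T)`. -/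
noncomputable def firstHitIn (d : ℕ) (W T : Set (Pt d)) (x : Pt d) : ℝ :=
  ∑' t : ℕ, prob d t (fun s => 1 ≤ t ∧ wpos d x s t ∈ W ∧ wpos d x s t ∈ T ∧
    ∀ u, 1 ≤ u → u < t → wpos d x s u ∉ W)

/-- `P_x(S_{τ_W − 1} = y ∣ τ_W < ∞)`. -/
noncomputable def transP (d : ℕ) (W : Set (Pt d)) (x y : Pt d) : ℝ :=
  hitFrom d W x y / retProb d W x

/-- The Green's function of simple random walk on `ℤ^d`. -/
noncomputable def green (d : ℕ) (x : Pt d) : ℝ :=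
  ∑' t : ℕ, prob d t (fun s => wpos d x s t = 0)

/-- Configurations: finite subsets of `ℤ^d`. -/
abbrev Conf (d : ℕ) := Finset (Pt d)

/-- `p_U(x, y)`, the probability that HAT activates at `x` and transports to `y`. -/
noncomputable def pHAT (d : ℕ) (U : Conf d) (x y : Pt d) : ℝ :=
  harm d (↑U) x * transP d ((↑U : Set (Pt d)) \ {x}) x y

open Classical in
/-- The transition probabilities of HAT. -/
noncomputable def hatProb (d : ℕ) (U V : Conf d) : ℝ :=
  if V = U then ∑' z : Pt d, pHAT d U z z
  else ∑' x : Pt d, ∑' y : Pt d,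
    if x ∈ U ∧ x ≠ y ∧ V = insert y (U.erase x) then pHAT d U x y else 0

instance (d : ℕ) : MeasurableSpace (Conf d) := ⊤

/-- `μ` is the law of HAT started from `U`. -/
def IsHATLaw (d : ℕ) (U : Conf d) (μ : Measure (ℕ → Conf d)) : Prop :=
  IsProbabilityMeasure μ ∧
  ∀ (t : ℕ) (u : ℕ → Conf d),
    μ {ω | ∀ s ≤ t, ω s = u s} =
      (if u 0 = U then 1 else 0) *
        ∏ s ∈ Finset.range t, ENNReal.ofReal (hatProb d (u s) (u (s + 1)))

/-- A signed permutation plus translation of `ℤ^d`. -/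
def SymImage (d : ℕ) (σ : Equiv.Perm (Fin d)) (ε : Fin d → ℤ) (v : Pt d) (x : Pt d) : Pt d :=
  fun i => v i + ε i * x (σ i)

/-- `SymEq d U V` holds when `V = gU` for a symmetry `g` of `ℤ^d`. -/
def SymEq (d : ℕ) (U V : Conf d) : Prop :=
  ∃ (σ : Equiv.Perm (Fin d)) (ε : Fin d → ℤ) (v : Pt d),
    (∀ i, ε i = 1 ∨ ε i = -1) ∧ V = U.image (SymImage d σ ε v)

/-- Euclidean distance on `ℤ^d`. -/
noncomputable def dist0 (d : ℕ) (x y : Pt d) : ℝ :=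
  Real.sqrt (∑ i, ((x i : ℝ) - (y i : ℝ)) ^ 2)

/-- Euclidean distance between finite subsets of `ℤ^d`. -/
noncomputable def setDist (d : ℕ) (A B : Finset (Pt d)) : ℝ :=
  sInf {r : ℝ | ∃ x ∈ A, ∃ y ∈ B, r = dist0 d x y}

/-- Euclidean diameter of a finite subset of `ℤ^d`. -/
noncomputable def diam0 (d : ℕ) (A : Finset (Pt d)) : ℝ :=
  sSup {r : ℝ | ∃ x ∈ A, ∃ y ∈ A, r = dist0 d x y}

/-- Lattice (nearest-neighbor) adjacency in `ℤ^d`. -/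
def latAdj (d : ℕ) (x y : Pt d) : Prop := (∑ i, (x i - y i).natAbs) = 1

/-- Exterior lattice boundary of a set. -/
def bdry (d : ℕ) (A : Set (Pt d)) : Set (Pt d) := {z | z ∉ A ∧ ∃ w ∈ A, latAdj d z w}

/-- Non-isolated configurations: some exposed element has a lattice neighbor in the set. -/
def NonIso (d : ℕ) (U : Conf d) : Prop :=
  ∃ x ∈ U, 0 < esc d (↑U) x ∧ ∃ y ∈ U, latAdj d x y

/-- `C` is a clustering (ordered partition into nonempty clusters) of `U`. -/
def IsClusteringOf (d : ℕ) {k : ℕ} (C : Fin k → Finset (Pt d)) (U : Finset (Pt d)) : Prop :=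
  (∀ i, (C i).Nonempty) ∧ (∀ i j, i ≠ j → Disjoint (C i) (C j)) ∧
    Finset.univ.biUnion C = U

/-- `C^{≠ i}`, the union of the clusters other than `i`. -/
def others (d : ℕ) {k : ℕ} (C : Fin k → Finset (Pt d)) (i : Fin k) : Finset (Pt d) :=
  Finset.univ.biUnion fun j => if j = i then ∅ else C j

/-- The separation of a clustering. -/
noncomputable def sep (d : ℕ) {k : ℕ} (C : Fin k → Finset (Pt d)) : ℝ :=
  ⨅ i, setDist d (C i) (others d C i)

/-- `(a, b)` separated dimer-or-trimer (DOT) clusterings. -/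
def IsDOT (d : ℕ) {k : ℕ} (C : Fin k → Finset (Pt d)) (a b : ℝ) : Prop :=
  (∀ i, (C i).card = 2 ∨ (C i).card = 3) ∧ a ≤ sep d C ∧
    ∀ i, diam0 d (C i) ≤ b * Real.log (setDist d (C i) (others d C i))

/-- Clusterings with an unspecified number of clusters. -/
abbrev ClusteringS (d : ℕ) := Σ k : ℕ, Fin k → Finset (Pt d)

/-- `π(C)`, the union of the clusters of `C`. -/
def confOf (d : ℕ) (C : ClusteringS d) : Conf d := Finset.univ.biUnion C.2

/-- `C ∈ 𝒞(U, a, b)`. -/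
def InC (d : ℕ) (U : Conf d) (a b : ℝ) (C : ClusteringS d) : Prop :=
  IsClusteringOf d C.2 U ∧ IsDOT d C.2 a b

/-- `U ∈ 𝒰_{d,n}(a, b)`. -/
def InU (d n : ℕ) (a b : ℝ) (U : Conf d) : Prop :=
  U.card = n ∧ ∃ C : ClusteringS d, InC d U a b C

/-- `C` is a clustering of an `n`-element configuration. -/
def IsClusteringConf (d n : ℕ) (C : ClusteringS d) : Prop :=
  (∀ i, (C.2 i).Nonempty) ∧ (∀ i j, i ≠ j → Disjoint (C.2 i) (C.2 j)) ∧
    (confOf d C).card = n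

open Classical in
/-- One step of the natural clustering. -/
noncomputable def clustStep (d : ℕ) (Ut Ut1 : Conf d) (C : ClusteringS d) : ClusteringS d :=
  if Ut1 = Ut then C
  else if h : ∃ p : Pt d × Pt d × Fin C.1,
      Ut \ Ut1 = {p.1} ∧ Ut1 \ Ut = {p.2.1} ∧ p.1 ∈ C.2 p.2.2 then
    ⟨C.1, Function.update C.2 h.choose.2.2
      (insert h.choose.2.1 ((C.2 h.choose.2.2).erase h.choose.1))⟩
  else ⟨1, fun _ => Ut1⟩

/-- The natural clustering of the trajectory `ω` with initial clustering `C0`. -/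
noncomputable def natClust (d : ℕ) (ω : ℕ → Conf d) (C0 : ClusteringS d) : ℕ → ClusteringS d
  | 0 => C0
  | t + 1 => clustStep d (ω t) (ω (t + 1)) (natClust d ω C0 t)

/-- `a_s = s^{1/2 − n^{−100}} + 100 n`. -/
noncomputable def aSep (n s : ℕ) : ℝ :=
  (s : ℝ) ^ ((1 : ℝ) / 2 - (n : ℝ) ^ (-(100 : ℝ))) + 100 * n

/-- `C^{i, x, y}`: remove `x` from cluster `i` of `C` and add `y` to that cluster. -/
def updC (d : ℕ) (C : ClusteringS d) (i : Fin C.1) (x y : Pt d) : ClusteringS d :=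
  ⟨C.1, Function.update C.2 i (insert y ((C.2 i).erase x))⟩

open Classical in
/-- The transition probabilities of the lifting of HAT to clusterings. -/
noncomputable def liftProb (d : ℕ) (E0 E1 : ClusteringS d) : ℝ :=
  ∑' x : Pt d, ∑' y : Pt d,
    if ∃ i : Fin E0.1, x ∈ E0.2 i ∧ E1 = updC d E0 i x y
    then pHAT d (confOf d E0) x y else 0

/-- The capacity of a clustering: the sum of the capacities of its clusters. -/
noncomputable def capS (d : ℕ) (C : ClusteringS d) : ℝ := ∑ i, capa d (↑(C.2 i))

/-- `H_C(i, x) = esc_{C^i}(x) / cap_C`. -/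
noncomputable def harmS (d : ℕ) (C : ClusteringS d) (i : Fin C.1) (x : Pt d) : ℝ :=
  esc d (↑(C.2 i)) x / capS d C

/-- `q_C(i, x, y)`. -/
noncomputable def qIHAT (d : ℕ) (C : ClusteringS d) (i : Fin C.1) (x y : Pt d) : ℝ :=
  harmS d C i x * transP d ((↑(C.2 i) : Set (Pt d)) \ {x}) x y

open Classical in
/-- The transition probabilities of intracluster HAT (IHAT). -/
noncomputable def ihatProb (d : ℕ) (D E : ClusteringS d) : ℝ :=
  ∑' x : Pt d, ∑' y : Pt d, ∑ i : Fin D.1,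
    if x ∈ D.2 i ∧ E = updC d D i x y then qIHAT d D i x y else 0

instance (d : ℕ) : MeasurableSpace (ClusteringS d) := ⊤

open Classical in
/-- `μ` is the law of the lifted HAT chain started from `E0`. -/
def IsLiftLaw (d : ℕ) (E0 : ClusteringS d) (μ : Measure (ℕ → ClusteringS d)) : Prop :=
  IsProbabilityMeasure μ ∧
  ∀ (t : ℕ) (u : ℕ → ClusteringS d),
    μ {ω | ∀ s ≤ t, ω s = u s} =
      (if u 0 = E0 then 1 else 0) *
        ∏ s ∈ Finset.range t, ENNReal.ofReal (liftProb d (u s) (u (s + 1)))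

open Classical in
/-- `μ` is the law of intracluster HAT started from `D0`. -/
def IsIHATLaw (d : ℕ) (D0 : ClusteringS d) (μ : Measure (ℕ → ClusteringS d)) : Prop :=
  IsProbabilityMeasure μ ∧
  ∀ (t : ℕ) (u : ℕ → ClusteringS d),
    μ {ω | ∀ s ≤ t, ω s = u s} =
      (if u 0 = D0 then 1 else 0) *
        ∏ s ∈ Finset.range t, ENNReal.ofReal (ihatProb d (u s) (u (s + 1)))

/-- `Pairs(E0, E1)`. -/
def Pairs (d : ℕ) (E0 E1 : ClusteringS d) : Set (Pt d × Pt d) :=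
  {p | 0 < pHAT d (confOf d E0) p.1 p.2 ∧
    ∃ i : Fin E0.1, p.1 ∈ E0.2 i ∧ E1 = updC d E0 i p.1 p.2}

/-- `Triples(E0, E1)`. -/
def Triples (d : ℕ) (E0 E1 : ClusteringS d) : Set (Fin E0.1 × Pt d × Pt d) :=
  {q | 0 < qIHAT d E0 q.1 q.2.1 q.2.2 ∧ E1 = updC d E0 q.1 q.2.1 q.2.2}

/-- The first standard basis vector of `ℤ^d`. -/
def e1v (d : ℕ) : Pt d := fun i => if (i : ℕ) = 0 then 1 else 0

/-- Reference dimers and trimers. -/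
def Ref (d : ℕ) : Set (Finset (Pt d)) :=
  {A | ∃ x : Pt d, A = {x, x + e1v d} ∨ A = {x, x + e1v d, x + e1v d + e1v d}}

/-- *-adjacency in `ℤ^d`: distinct points differing by at most one in each coordinate. -/
def starAdj (d : ℕ) (x y : Pt d) : Prop := x ≠ y ∧ ∀ i, (x i - y i).natAbs ≤ 1

/-- The *-visible boundary of `A`. -/
def visBdry (d : ℕ) (A : Finset (Pt d)) : Set (Pt d) :=
  {x | (∃ y ∈ A, starAdj d x y) ∧
    ∃ γ : ℕ → Pt d, γ 0 = x ∧ (∀ t, latAdj d (γ t) (γ (t + 1))) ∧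
      (∀ t, γ t ∉ A) ∧ ∀ r : ℝ, ∃ t, r < dist0 d (γ t) 0}

/-- `A` is connected in the nearest-neighbor graph of `ℤ^d`. -/
def LatConnected (d : ℕ) (A : Finset (Pt d)) : Prop :=
  ∀ x ∈ A, ∀ y ∈ A, ∃ (L : ℕ) (γ : ℕ → Pt d), γ 0 = x ∧ γ L = y ∧
    (∀ t < L, latAdj d (γ t) (γ (t + 1))) ∧ ∀ t ≤ L, γ t ∈ A

/-- Strict lexicographic order on `ℤ^d`. -/
def lexLt (d : ℕ) (x y : Pt d) : Prop :=
  ∃ i : Fin d, (∀ j, j < i → x j = y j) ∧ x i < y i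

/-- `x` is the lex (least) element of `A`. -/
def IsLex (d : ℕ) (A : Finset (Pt d)) (x : Pt d) : Prop :=
  x ∈ A ∧ ∀ y ∈ A, y ≠ x → lexLt d x y

/-!
For large `K` the function `z ↦ (|z|² + K)^((2 - d) / 2)` is superharmonic, so its multiple with
value `1` at the origin dominates the probability of ever hitting the origin. Summing translates of
it bounds the chance of hitting a finite set `V` at distance at least `r` by a multiple of
`|V| r^(2 - d)`, and adding `V` to a set lowers its escape probabilities by at most that much.

Positive escape probabilities of sets with at most `N` points are bounded below, by induction on
`N`: either the set lies in a fixed ball, and up to translation there are finitely many such sets,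
or dropping its far points changes the escape probability little. Hence the absolute loss above is
also a relative one, and since the capacity of the configuration is at most the sum of the
capacities of its clusters, the comparison passes to harmonic measures.
-/

section Analysis

open Filter Topology Asymptotics

lemma one_add_rpow_sub_taylor_isBigO (a : ℝ) :
    (fun w : ℝ => (1 + w) ^ a - (1 + a * w + a * (a - 1) / 2 * w ^ 2 + Ring.choose a 3 * w ^ 3))
      =O[𝓝 0] fun w => w ^ 4 := by
  have hchoose : Ring.choose a 2 = a * (a - 1) / 2 := by
    rw [Ring.choose_eq_smul, Polynomial.descPochhammer_smeval_eq_ascPochhammer,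
      Polynomial.ascPochhammer_smeval_cast, Polynomial.ascPochhammer_smeval_eq_eval]
    simp only [Nat.factorial_two, Nat.cast_ofNat, ascPochhammer_succ_right, ascPochhammer_zero,
      Nat.cast_zero, add_zero, one_mul, Nat.cast_one, Polynomial.eval_mul, Polynomial.eval_X,
      Polynomial.eval_add, Polynomial.eval_one, smul_eq_mul]
    ring
  have hseries := (Real.one_add_rpow_hasFPowerSeriesAt_zero (a := a)).isBigO_sub_partialSum_pow 4
  refine (hseries.congr_left fun w => ?_).trans (.of_norm_right ?_)
  · simp only [zero_add, FormalMultilinearSeries.partialSum, binomialSeries,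
      FormalMultilinearSeries.apply_eq_prod_smul_coeff, Finset.prod_const, Finset.card_univ,
      Fintype.card_fin, FormalMultilinearSeries.coeff_ofScalars, smul_eq_mul,
      Finset.sum_range_succ, Finset.range_one, Finset.sum_singleton, pow_zero,
      Ring.choose_zero_right', mul_one, pow_one, Ring.choose_one_right', hchoose]
    ring
  · simpa using isBigO_refl _ _

lemma eventually_atTop_forall_sq_le_imp_div {p : ℝ → Prop} (hp : ∀ᶠ w in 𝓝 0, p w) (L : ℝ) :
    ∀ᶠ s in atTop, ∀ v : ℝ, v ^ 2 ≤ L * s → p (v / s) := by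
  obtain ⟨η, hη, hball⟩ := Metric.eventually_nhds_iff.1 hp
  filter_upwards [eventually_gt_atTop 0, eventually_gt_atTop (L / η ^ 2)] with s hs hsL v hv
  refine hball ?_
  rw [dist_zero_right, Real.norm_eq_abs]
  refine abs_lt_of_sq_lt_sq ?_ hη.le
  rw [div_lt_iff₀ (by positivity)] at hsL
  rw [div_pow, div_lt_iff₀ (by positivity)]
  nlinarith

lemma exists_eventually_add_rpow_le (a L : ℝ) :
    ∃ D : ℝ, ∀ᶠ s in atTop, ∀ v : ℝ, v ^ 2 ≤ L * s → (s + v) ^ a ≤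
      s ^ a * (1 + a * (v / s) + a * (a - 1) / 2 * (v / s) ^ 2 + Ring.choose a 3 * (v / s) ^ 3
        + D / s ^ 2) := by
  obtain ⟨D, hD, hrem⟩ := (one_add_rpow_sub_taylor_isBigO a).exists_nonneg
  have hpos : ∀ᶠ w : ℝ in 𝓝 0, 0 ≤ 1 + w :=
    (eventually_ge_nhds (by norm_num : (-1 : ℝ) < 0)).mono fun w hw => by linarith
  refine ⟨D * L ^ 2, ?_⟩
  filter_upwards [eventually_atTop_forall_sq_le_imp_div (hrem.bound.and hpos) L,
    eventually_gt_atTop 0] with s hs hs0 v hv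
  obtain ⟨hbound, hnonneg⟩ := hs v hv
  have hquartic : (v / s) ^ 4 ≤ L ^ 2 / s ^ 2 := calc
    (v / s) ^ 4 = (v ^ 2) ^ 2 / s ^ 4 := by ring
    _ ≤ (L * s) ^ 2 / s ^ 4 := by gcongr
    _ = L ^ 2 / s ^ 2 := by field_simp
  have hupper := (le_abs_self _).trans hbound
  rw [norm_pow, Real.norm_eq_abs, (by decide : Even 4).pow_abs] at hupper
  rw [show s + v = s * (1 + v / s) by field_simp, Real.mul_rpow hs0.le hnonneg]
  refine mul_le_mul_of_nonneg_left ?_ (by positivity)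
  calc (1 + v / s) ^ a ≤ _ + D * (v / s) ^ 4 := sub_le_iff_le_add'.1 hupper
    _ ≤ _ + D * (L ^ 2 / s ^ 2) := by gcongr
    _ = _ := by ring

lemma exists_eventually_add_rpow_add_sub_rpow_le (a : ℝ) :
    ∃ C : ℝ, ∀ᶠ s in atTop, ∀ u : ℝ, u ^ 2 ≤ s →
      (s + (1 + 2 * u)) ^ a + (s + (1 - 2 * u)) ^ a ≤
        s ^ a * (2 + (2 * a * s + 4 * a * (a - 1) * u ^ 2 + C) / s ^ 2) := by
  set c := Ring.choose a 3
  obtain ⟨D, hD⟩ := exists_eventually_add_rpow_le a 10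
  refine ⟨a * (a - 1) + 26 * |c| + 2 * D, ?_⟩
  filter_upwards [hD, eventually_ge_atTop 1] with s hs hs1 u hu
  have : 0 < s := by linarith
  -- The odd parts of the two cubic terms cancel, which gains a factor `√s`.
  have hcubic : c * (2 + 24 * u ^ 2) / s ^ 3 ≤ 26 * |c| / s ^ 2 := calc
    c * (2 + 24 * u ^ 2) / s ^ 3 ≤ |c| * (26 * s) / s ^ 3 := by
      gcongr
      · exact le_abs_self c
      · linarith
    _ = 26 * |c| / s ^ 2 := by field_simp
  have hplus := hs (1 + 2 * u) (by nlinarith [sq_nonneg (1 - 2 * u)])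
  have hminus := hs (1 - 2 * u) (by nlinarith [sq_nonneg (1 + 2 * u)])
  refine (add_le_add hplus hminus).trans ?_
  rw [← mul_add]
  refine mul_le_mul_of_nonneg_left ?_ (by positivity)
  calc _ = 2 + (2 * a * s + 4 * a * (a - 1) * u ^ 2 + (a * (a - 1) + 2 * D)) / s ^ 2
        + c * (2 + 24 * u ^ 2) / s ^ 3 := by field_simp; ring
    _ ≤ 2 + (2 * a * s + 4 * a * (a - 1) * u ^ 2 + (a * (a - 1) + 2 * D)) / s ^ 2
        + 26 * |c| / s ^ 2 := by gcongr
    _ = _ := by ring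

end Analysis

section Superharmonic

open Filter

variable {d : ℕ}

/-- The `2d` unit steps, indexed by a coordinate and a sign. -/
noncomputable def dirEquiv (d : ℕ) : Fin d × ℤˣ ≃ Dir d :=
  Equiv.ofBijective (fun p => ⟨Pi.single p.1 (p.2 : ℤ), p.1, by
    rcases Int.units_eq_one_or p.2 with h | h <;> simp [h]⟩) <| by
    constructor
    · rintro ⟨i, ε⟩ ⟨j, ε'⟩ h
      have heq : (Pi.single i (ε : ℤ) : Pt d) = Pi.single j (ε' : ℤ) := congrArg Subtype.val h
      obtain rfl : i = j := by
        by_contra hne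
        simpa [hne] using congrFun heq i
      simpa [Units.ext_iff] using Pi.single_injective i heq
    · rintro ⟨s, i, rfl | rfl⟩
      exacts [⟨(i, 1), by simp⟩, ⟨(i, -1), by simp⟩]

lemma coe_dirEquiv (p : Fin d × ℤˣ) : (dirEquiv d p : Pt d) = Pi.single p.1 (p.2 : ℤ) := rfl

noncomputable instance : Fintype (Dir d) := Fintype.ofEquiv _ (dirEquiv d)

lemma ncard_dir : (Dir d).ncard = 2 * d := by
  rw [← Nat.card_coe_set_eq, ← Nat.card_congr (dirEquiv d)]
  simp [mul_comm]

/-- The average of `g` over the `2d` lattice neighbours of a point: the one-step transition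
operator of simple random walk. -/
noncomputable def nbrAvg (g : Pt d → ℝ) (x : Pt d) : ℝ :=
  (∑ e : Dir d, g (x + e)) / (2 * d)

lemma nbrAvg_apply (g : Pt d → ℝ) (x : Pt d) :
    nbrAvg g x = (∑ i, (g (x + Pi.single i 1) + g (x + Pi.single i (-1)))) / (2 * d) := by
  rw [nbrAvg, ← (dirEquiv d).sum_comp, Fintype.sum_prod_type]
  simp [UnitsInt.univ, coe_dirEquiv]

lemma nbrAvg_mono {g h : Pt d → ℝ} (H : g ≤ h) : nbrAvg g ≤ nbrAvg h := fun x => by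
  unfold nbrAvg
  gcongr
  exact H _

lemma nbrAvg_sub (g h : Pt d → ℝ) : nbrAvg (g - h) = nbrAvg g - nbrAvg h := by
  ext x
  simp [nbrAvg, sub_div]

/-- `g` is superharmonic for simple random walk: it dominates its average over neighbours. -/
def IsSuperharmonic (g : Pt d → ℝ) : Prop := nbrAvg g ≤ g

lemma IsSuperharmonic.const_mul {g : Pt d → ℝ} (hg : IsSuperharmonic g) {c : ℝ} (hc : 0 ≤ c) :
    IsSuperharmonic fun x => c * g x := fun x => calc
  nbrAvg (fun x => c * g x) x = c * nbrAvg g x := by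
    simp only [nbrAvg, ← Finset.mul_sum, mul_div_assoc]
  _ ≤ c * g x := mul_le_mul_of_nonneg_left (hg x) hc

lemma IsSuperharmonic.sum_translate {f : Pt d → ℝ} (hf : IsSuperharmonic f)
    (V : Finset (Pt d)) : IsSuperharmonic fun x => ∑ y ∈ V, f (x - y) := fun x => calc
  nbrAvg (fun x => ∑ y ∈ V, f (x - y)) x = ∑ y ∈ V, nbrAvg f (x - y) := by
    simp only [nbrAvg, ← Finset.sum_div, sub_add_eq_add_sub]
    rw [Finset.sum_comm]
  _ ≤ ∑ y ∈ V, f (x - y) := Finset.sum_le_sum fun y _ => hf (x - y)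

/-- The squared Euclidean norm of a lattice point. -/
def sqNorm (z : Pt d) : ℝ := ∑ j, (z j : ℝ) ^ 2

lemma sqNorm_nonneg (z : Pt d) : 0 ≤ sqNorm z := Finset.sum_nonneg fun _ _ => sq_nonneg _

lemma sq_coord_le_sqNorm (z : Pt d) (i : Fin d) : (z i : ℝ) ^ 2 ≤ sqNorm z :=
  Finset.single_le_sum (f := fun j => (z j : ℝ) ^ 2) (fun _ _ => sq_nonneg _) (Finset.mem_univ i)

lemma dist0_eq_sqrt_sqNorm (x y : Pt d) : dist0 d x y = √(sqNorm (x - y)) := by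
  simp [dist0, sqNorm]

lemma sqNorm_add_single (z : Pt d) (i : Fin d) (m : ℤ) :
    sqNorm (z + Pi.single i m) = sqNorm z + (m ^ 2 + 2 * m * z i) := by
  have hcoord (j : Fin d) : (((z + Pi.single i m : Pt d) j : ℤ) : ℝ) ^ 2 =
      (z j : ℝ) ^ 2 + if j = i then (m : ℝ) ^ 2 + 2 * m * z i else 0 := by
    rcases eq_or_ne j i with rfl | hne
    · simp only [Pi.add_apply, Pi.single_eq_same, Int.cast_add, if_true]
      ring
    · simp [hne]
  simp only [sqNorm, hcoord, Finset.sum_add_distrib, Finset.sum_ite_eq', Finset.mem_univ, if_true]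

lemma exists_isSuperharmonic_rpow {a : ℝ} (ha : a < 0) (had : 2 - d ≤ 2 * a) :
    ∃ K > 0, IsSuperharmonic fun z : Pt d => (sqNorm z + K) ^ a := by
  obtain ⟨C, hC⟩ := exists_eventually_add_rpow_add_sub_rpow_le a
  have hquad : 0 < 4 * a * (a - 1) := by nlinarith
  obtain ⟨K, hstep, hK, hKC⟩ := ((eventually_forall_ge_atTop.2 hC).and
    ((eventually_gt_atTop 0).and
      ((tendsto_id.const_mul_atTop hquad).eventually_ge_atTop (d * C)))).exists
  refine ⟨K, hK, fun z => ?_⟩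
  set s := sqNorm z + K with hs
  have hKs : K ≤ s := by linarith [sqNorm_nonneg z]
  have hs0 : 0 < s := hK.trans_le hKs
  have hexcess : ∑ i, (2 * a * s + 4 * a * (a - 1) * (z i : ℝ) ^ 2 + C) ≤ 0 := calc
    _ = 2 * a * s * (d + 2 * a - 2) + (d * C - 4 * a * (a - 1) * K) := by
      simp only [Finset.sum_add_distrib, Finset.sum_const, Finset.card_univ, Fintype.card_fin,
        nsmul_eq_mul, ← Finset.mul_sum]
      rw [← sqNorm, show sqNorm z = s - K by linarith]
      ring
    _ ≤ 0 := add_nonpos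
      (mul_nonpos_of_nonpos_of_nonneg (by nlinarith) (by linarith)) (sub_nonpos.2 hKC)
  rw [nbrAvg_apply]
  refine div_le_of_le_mul₀ (by positivity) (by positivity) ?_
  calc ∑ i, ((sqNorm (z + Pi.single i 1) + K) ^ a + (sqNorm (z + Pi.single i (-1)) + K) ^ a)
      = ∑ i, ((s + (1 + 2 * z i)) ^ a + (s + (1 - 2 * z i)) ^ a) := by
        refine Finset.sum_congr rfl fun i _ => ?_
        simp only [sqNorm_add_single, hs]
        push_cast
        congr 2 <;> ring
    _ ≤ ∑ i, s ^ a * (2 + (2 * a * s + 4 * a * (a - 1) * (z i : ℝ) ^ 2 + C) / s ^ 2) :=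
        Finset.sum_le_sum fun i _ => hstep s hKs _ (by linarith [sq_coord_le_sqNorm z i])
    _ = s ^ a * (2 * d + (∑ i, (2 * a * s + 4 * a * (a - 1) * (z i : ℝ) ^ 2 + C)) / s ^ 2) := by
        rw [← Finset.mul_sum, Finset.sum_add_distrib, ← Finset.sum_div]
        simp [mul_comm]
    _ ≤ s ^ a * (2 * d) := by
        refine mul_le_mul_of_nonneg_left ?_ (by positivity)
        linarith [div_nonpos_of_nonpos_of_nonneg hexcess (sq_nonneg s)]

lemma exists_isSuperharmonic_decay (hd : 3 ≤ d) :
    ∃ M > 0, ∃ f : Pt d → ℝ, IsSuperharmonic f ∧ 0 ≤ f ∧ f 0 = 1 ∧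
      ∀ (z : Pt d) (r : ℝ), 0 < r → r ≤ √(sqNorm z) → f z ≤ M * r ^ ((2 : ℝ) - d) := by
  have hd' : (3 : ℝ) ≤ d := mod_cast hd
  set a : ℝ := (2 - d) / 2 with ha_def
  have ha : a < 0 := by linarith
  obtain ⟨K, hK, hsuper⟩ := exists_isSuperharmonic_rpow (d := d) ha (by linarith)
  refine ⟨(K ^ a)⁻¹, by positivity, _, hsuper.const_mul (c := (K ^ a)⁻¹) (by positivity),
    fun z => ?_, ?_, fun z r hr hrz => ?_⟩
  · have := sqNorm_nonneg z
    simp only [Pi.zero_apply]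
    positivity
  · simp [sqNorm, (Real.rpow_pos_of_pos hK a).ne']
  · refine mul_le_mul_of_nonneg_left ?_ (by positivity)
    calc (sqNorm z + K) ^ a ≤ (r ^ 2) ^ a :=
          Real.rpow_le_rpow_of_nonpos (by positivity)
            (((Real.le_sqrt' hr).1 hrz).trans (le_add_of_nonneg_right hK.le)) ha.le
      _ = r ^ ((2 : ℝ) - d) := by
          rw [← Real.rpow_natCast_mul hr.le]
          congr 1
          push_cast
          ring

end Superharmonic

section Walk

variable {d : ℕ} {T : ℕ}

lemma wpos_cons (x e : Pt d) (s : Fin T → Pt d) (t : ℕ) :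
    wpos d x (Fin.cons e s : Fin (T + 1) → Pt d) (t + 1) = wpos d (x + e) s t := by
  simp [wpos, Finset.sum_filter, Fin.sum_univ_succ, add_assoc]

lemma wpos_zero (x : Pt d) (s : Fin T → Pt d) : wpos d x s 0 = x := by
  simp [wpos]

lemma wpos_zero_left_add (x : Pt d) (s : Fin T → Pt d) (t : ℕ) :
    wpos d 0 s t + x = wpos d x s t := by
  simp [wpos, add_comm]

/-- The sequences of unit steps counted by `prob d T P`, as functions into the type of steps. -/
def stepsEmbedding (P : (Fin T → Pt d) → Prop) :
    {s : Fin T → Pt d // (∀ i, s i ∈ Dir d) ∧ P s} ↪ (Fin T → Dir d) where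
  toFun s i := ⟨s.1 i, s.2.1 i⟩
  inj' _ _ h := Subtype.ext <| funext fun i => congrArg Subtype.val (congrFun h i)

instance (P : (Fin T → Pt d) → Prop) :
    Finite {s : Fin T → Pt d // (∀ i, s i ∈ Dir d) ∧ P s} :=
  .of_injective _ (stepsEmbedding P).injective

/-- Splitting the first step off a sequence of unit steps. -/
def firstStepEquiv (P : (Fin (T + 1) → Pt d) → Prop) :
    {s : Fin (T + 1) → Pt d // (∀ i, s i ∈ Dir d) ∧ P s} ≃
      Σ e : Dir d, {s : Fin T → Pt d // (∀ i, s i ∈ Dir d) ∧ P (Fin.cons (e : Pt d) s)} where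
  toFun s := ⟨⟨s.1 0, s.2.1 0⟩, Fin.tail s.1, fun i => s.2.1 i.succ, by simpa using s.2.2⟩
  invFun p := ⟨Fin.cons (p.1 : Pt d) p.2.1, Fin.cases p.1.2 p.2.2.1, p.2.2.2⟩
  left_inv s := Subtype.ext (Fin.cons_self_tail s.1)
  right_inv _ := rfl

lemma prob_succ (P : (Fin (T + 1) → Pt d) → Prop) :
    prob d (T + 1) P = (∑ e : Dir d, prob d T fun s => P (Fin.cons (e : Pt d) s)) / (2 * d) := by
  simp only [prob, Nat.card_congr (firstStepEquiv P), Nat.card_sigma, ← Finset.sum_div, div_div,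
    pow_succ]
  push_cast
  rfl

lemma prob_nonneg (P : (Fin T → Pt d) → Prop) : 0 ≤ prob d T P := by
  unfold prob
  positivity

lemma prob_le_one (P : (Fin T → Pt d) → Prop) : prob d T P ≤ 1 := by
  refine div_le_one_of_le₀ ?_ (by positivity)
  exact_mod_cast (Nat.card_le_card_of_injective _ (stepsEmbedding P).injective).trans_eq
    (by simp [ncard_dir])

lemma prob_mono {P Q : (Fin T → Pt d) → Prop} (h : ∀ s, P s → Q s) :
    prob d T P ≤ prob d T Q := by
  unfold prob
  gcongr
  exact Nat.card_le_card_of_injective _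
    (Subtype.impEmbedding _ _ fun s hs => ⟨hs.1, h s hs.2⟩).injective

lemma prob_false : prob d T (fun _ => False) = 0 := by
  simp [prob]

end Walk

section Escape

variable {d : ℕ} {A V : Set (Pt d)} {x : Pt d}

/-- The probability that the walk started at `x` avoids `A` at all times `1, …, T`. -/
noncomputable def avoidProb (A : Set (Pt d)) (T : ℕ) (x : Pt d) : ℝ :=
  prob d T fun s => ∀ t, 1 ≤ t → t ≤ T → wpos d x s t ∉ A

lemma avoidProb_nonneg (A : Set (Pt d)) (T : ℕ) (x : Pt d) : 0 ≤ avoidProb A T x :=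
  prob_nonneg _

lemma avoidProb_le_one (A : Set (Pt d)) (T : ℕ) (x : Pt d) : avoidProb A T x ≤ 1 :=
  prob_le_one _

lemma avoidProb_zero (A : Set (Pt d)) : avoidProb A 0 = 1 := by
  ext x
  have : Unique {s : Fin 0 → Pt d // (∀ i, s i ∈ Dir d) ∧
      ∀ t, 1 ≤ t → t ≤ 0 → wpos d x s t ∉ A} :=
    { default := ⟨Fin.elim0, fun i => i.elim0, fun t h1 h2 => by omega⟩
      uniq := fun s => Subtype.ext (Subsingleton.elim _ _) }
  rw [avoidProb, prob, Nat.card_unique]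
  simp

lemma avoidProb_succ (A : Set (Pt d)) (T : ℕ) :
    avoidProb A (T + 1) = nbrAvg (Aᶜ.indicator (avoidProb A T)) := by
  ext x
  rw [avoidProb, prob_succ, nbrAvg]
  congr 1
  refine Finset.sum_congr rfl fun e _ => ?_
  have hevent (s : Fin T → Pt d) :
      (∀ t, 1 ≤ t → t ≤ T + 1 → wpos d x (Fin.cons (e : Pt d) s : Fin (T + 1) → Pt d) t ∉ A) ↔
        x + e ∉ A ∧ ∀ t, 1 ≤ t → t ≤ T → wpos d (x + e) s t ∉ A := by
    constructor
    · exact fun h => ⟨by simpa only [wpos_cons, wpos_zero] using h 1 le_rfl (by omega),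
        fun t _ ht => by simpa only [wpos_cons] using h (t + 1) (by omega) (by omega)⟩
    · rintro ⟨h0, h⟩ (_ | _ | t) h1 ht
      · omega
      · rwa [wpos_cons, wpos_zero]
      · rw [wpos_cons]
        exact h _ (by omega) (by omega)
  by_cases hA : x + e ∈ A
  · simp [hevent, hA, prob_false]
  · simp [hevent, hA, avoidProb]

lemma avoidProb_anti {B : Set (Pt d)} (h : A ⊆ B) (T : ℕ) (x : Pt d) :
    avoidProb B T x ≤ avoidProb A T x :=
  prob_mono fun _ hs t h1 ht hA => hs t h1 ht (h hA)

lemma avoidProb_sub_le {F : Pt d → ℝ} (hF : IsSuperharmonic F) (hF0 : 0 ≤ F)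
    (hFV : ∀ y ∈ V, 1 ≤ F y) (A : Set (Pt d)) (T : ℕ) :
    avoidProb A T - F ≤ avoidProb (A ∪ V) T := by
  induction T with
  | zero => simpa only [avoidProb_zero] using sub_le_self 1 hF0
  | succ T ih =>
    have hstep : Aᶜ.indicator (avoidProb A T) - F ≤ (A ∪ V)ᶜ.indicator (avoidProb (A ∪ V) T) := by
      intro y
      by_cases hyA : y ∈ A
      · simpa [hyA] using hF0 y
      by_cases hyV : y ∈ V
      · simpa [hyA, hyV] using (avoidProb_le_one A T y).trans (hFV y hyV)
      · simpa [hyA, hyV] using ih y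
    calc avoidProb A (T + 1) - F ≤ nbrAvg (Aᶜ.indicator (avoidProb A T)) - nbrAvg F := by
          rw [avoidProb_succ]
          exact sub_le_sub_left hF _
      _ ≤ nbrAvg ((A ∪ V)ᶜ.indicator (avoidProb (A ∪ V) T)) := by
          rw [← nbrAvg_sub]
          exact nbrAvg_mono hstep
      _ = avoidProb (A ∪ V) (T + 1) := (avoidProb_succ _ _).symm

lemma avoidProb_preimage_add_right (A : Set (Pt d)) (T : ℕ) (x : Pt d) :
    avoidProb ((· + x) ⁻¹' A) T 0 = avoidProb A T x := by
  simp only [avoidProb, Set.mem_preimage, wpos_zero_left_add]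

lemma esc_of_mem (hx : x ∈ A) : esc d A x = ⨅ T, avoidProb A T x := if_pos hx

lemma esc_of_notMem (hx : x ∉ A) : esc d A x = 0 := if_neg hx

lemma bddBelow_avoidProb (A : Set (Pt d)) (x : Pt d) :
    BddBelow (Set.range fun T => avoidProb A T x) :=
  ⟨0, by rintro _ ⟨T, rfl⟩; exact avoidProb_nonneg A T x⟩

lemma esc_nonneg (A : Set (Pt d)) (x : Pt d) : 0 ≤ esc d A x := by
  by_cases hx : x ∈ A
  · rw [esc_of_mem hx]
    exact Real.iInf_nonneg fun T => avoidProb_nonneg A T x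
  · rw [esc_of_notMem hx]

lemma esc_anti {B : Set (Pt d)} (h : A ⊆ B) (hx : x ∈ A) : esc d B x ≤ esc d A x := by
  rw [esc_of_mem hx, esc_of_mem (h hx)]
  exact ciInf_mono (bddBelow_avoidProb B x) fun T => avoidProb_anti h T x

lemma esc_preimage_add_right (A : Set (Pt d)) (x : Pt d) :
    esc d ((· + x) ⁻¹' A) 0 = esc d A x := by
  by_cases hx : x ∈ A
  · rw [esc_of_mem hx, esc_of_mem (by simpa using hx)]
    simp only [avoidProb_preimage_add_right]
  · rw [esc_of_notMem hx, esc_of_notMem (by simpa using hx)]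

lemma esc_sub_le {F : Pt d → ℝ} (hF : IsSuperharmonic F) (hF0 : 0 ≤ F)
    (hFV : ∀ y ∈ V, 1 ≤ F y) (A : Set (Pt d)) (x : Pt d) :
    esc d A x - F x ≤ esc d (A ∪ V) x := by
  by_cases hx : x ∈ A
  · rw [esc_of_mem hx, esc_of_mem (Or.inl hx)]
    refine le_ciInf fun T => ?_
    exact (sub_le_sub_right (ciInf_le (bddBelow_avoidProb A x) T) _).trans
      (avoidProb_sub_le hF hF0 hFV A T x)
  · rw [esc_of_notMem hx, zero_sub]
    exact (neg_nonpos.2 (hF0 x)).trans (esc_nonneg _ x)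

theorem exists_esc_sub_le (hd : 3 ≤ d) :
    ∃ M > 0, ∀ (A : Set (Pt d)) (V : Finset (Pt d)) (x : Pt d) (r : ℝ), 0 < r →
      (∀ y ∈ V, r ≤ dist0 d x y) →
        esc d A x - M * V.card * r ^ ((2 : ℝ) - d) ≤ esc d (A ∪ V) x := by
  obtain ⟨M, hM, f, hf, hf0, hf1, hdecay⟩ := exists_isSuperharmonic_decay hd
  refine ⟨M, hM, fun A V x r hr hV => ?_⟩
  have hone : ∀ y ∈ (V : Set (Pt d)), 1 ≤ ∑ z ∈ V, f (y - z) := fun y hy => calc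
    1 = f (y - y) := by rw [sub_self, hf1]
    _ ≤ _ := Finset.single_le_sum (f := fun z => f (y - z)) (fun _ _ => hf0 _) hy
  have hsum : ∑ y ∈ V, f (x - y) ≤ M * V.card * r ^ ((2 : ℝ) - d) := calc
    _ ≤ V.card • (M * r ^ ((2 : ℝ) - d)) := Finset.sum_le_card_nsmul _ _ _ fun y hy =>
      hdecay _ r hr ((hV y hy).trans_eq (dist0_eq_sqrt_sqNorm x y))
    _ = _ := by rw [nsmul_eq_mul]; ring
  exact (sub_le_sub_left hsum _).trans <|
    esc_sub_le (hf.sum_translate V) (fun y => Finset.sum_nonneg fun _ _ => hf0 _) hone A x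

end Escape

section EscapeLowerBound

open Filter Topology

variable {d : ℕ}

lemma exists_pos_le_esc_of_forall_dist0_le (d : ℕ) (R : ℝ) :
    ∃ δ > 0, ∀ (A : Set (Pt d)) (x : Pt d), (∀ y ∈ A, dist0 d x y ≤ R) →
      0 < esc d A x → δ ≤ esc d A x := by
  set box : Set (Pt d) := Set.Icc (fun _ => -⌈R⌉) fun _ => ⌈R⌉
  have hshapes : ∀ᶠ δ in 𝓝[>] (0 : ℝ), ∀ B ∈ {B | B ⊆ box}, 0 < esc d B 0 → δ ≤ esc d B 0 := by
    refine (eventually_all_finite (Set.finite_Icc _ _).finite_subsets).2 fun B _ => ?_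
    by_cases hB : 0 < esc d B 0
    · filter_upwards [Ioc_mem_nhdsGT hB] with δ hδ _ using hδ.2
    · exact .of_forall fun δ h => absurd h hB
  obtain ⟨δ, hle, hδ⟩ := (hshapes.and self_mem_nhdsWithin).exists
  refine ⟨δ, hδ, fun A x hA hpos => ?_⟩
  have hbox : (· + x) ⁻¹' A ⊆ box := by
    intro z hz
    have hcoord (i : Fin d) : |z i| ≤ ⌈R⌉ := by
      have hdist : √(sqNorm (-z)) ≤ R := by
        simpa [dist0_eq_sqrt_sqNorm] using hA _ hz
      have := (Real.abs_le_sqrt (sq_coord_le_sqNorm (-z) i)).trans (hdist.trans (Int.le_ceil R))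
      rw [← abs_neg]
      exact_mod_cast this
    exact ⟨fun i => (abs_le.1 (hcoord i)).1, fun i => (abs_le.1 (hcoord i)).2⟩
  rw [← esc_preimage_add_right] at hpos ⊢
  exact hle _ hbox hpos

lemma exists_radius_esc_sub_le (hd : 3 ≤ d) (N : ℕ) {ε : ℝ} (hε : 0 < ε) :
    ∃ R > 0, ∀ (A : Set (Pt d)) (V : Finset (Pt d)) (x : Pt d), V.card ≤ N →
      (∀ y ∈ V, R ≤ dist0 d x y) → esc d A x - ε ≤ esc d (A ∪ V) x := by
  obtain ⟨M, hM, hfar⟩ := exists_esc_sub_le hd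
  have hlim : Tendsto (fun R : ℝ => M * N * R ^ ((2 : ℝ) - d)) atTop (𝓝 0) := by
    have hd' : (0 : ℝ) < d - 2 := sub_pos.2 (by exact_mod_cast hd)
    simpa using (tendsto_rpow_neg_atTop hd').const_mul (M * N)
  obtain ⟨R, hRε, hR⟩ := ((hlim.eventually_le_const hε).and (eventually_gt_atTop 0)).exists
  refine ⟨R, hR, fun A V x hV hdist => (sub_le_sub_left ?_ _).trans (hfar A V x R hR hdist)⟩
  calc M * V.card * R ^ ((2 : ℝ) - d) ≤ M * N * R ^ ((2 : ℝ) - d) := by gcongr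
    _ ≤ ε := hRε

theorem exists_pos_le_esc_of_card_le (hd : 3 ≤ d) (N : ℕ) :
    ∃ δ > 0, ∀ A : Finset (Pt d), A.card ≤ N → ∀ x, 0 < esc d A x → δ ≤ esc d A x := by
  induction N with
  | zero =>
    refine ⟨1, one_pos, fun A hA x hpos => ?_⟩
    obtain rfl : A = ∅ := by simpa using hA
    simp [esc_of_notMem] at hpos
  | succ N ih =>
    obtain ⟨δ₁, hδ₁, hfew⟩ := ih
    obtain ⟨R, hR, hremove⟩ := exists_radius_esc_sub_le hd (N + 1) (half_pos hδ₁)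
    obtain ⟨δ₂, hδ₂, hbounded⟩ := exists_pos_le_esc_of_forall_dist0_le d R
    refine ⟨min (δ₁ / 2) δ₂, by positivity, fun A hA x hpos => ?_⟩
    by_cases hball : ∀ y ∈ A, dist0 d x y ≤ R
    · exact (min_le_right _ _).trans (hbounded A x hball hpos)
    set near := A.filter fun y => dist0 d x y ≤ R
    set far := A.filter fun y => ¬ dist0 d x y ≤ R
    have hunion : (near ∪ far : Set (Pt d)) = A := by
      exact_mod_cast A.filter_union_filter_not_eq fun y => dist0 d x y ≤ R
    have hxA : x ∈ A := by
      by_contra hx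
      simp [esc_of_notMem hx] at hpos
    have hx : x ∈ near := Finset.mem_filter.2 ⟨hxA, by simpa [dist0] using hR.le⟩
    have hcard : near.card < A.card := by
      push Not at hball
      obtain ⟨y, hyA, hy⟩ := hball
      exact Finset.card_lt_card (Finset.filter_ssubset.2 ⟨y, hyA, hy.not_ge⟩)
    have hδnear : δ₁ ≤ esc d near x :=
      hfew near (by omega) x (hpos.trans_le (esc_anti (A.filter_subset _) hx))
    calc min (δ₁ / 2) δ₂ ≤ δ₁ - δ₁ / 2 := (min_le_left _ _).trans_eq (by ring)
      _ ≤ esc d near x - δ₁ / 2 := by gcongr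
      _ ≤ esc d (near ∪ far) x := hremove near far x ((Finset.card_filter_le _ _).trans hA)
        fun y hy => (not_le.1 (Finset.mem_filter.1 hy).2).le
      _ = esc d A x := by rw [hunion]

end EscapeLowerBound

section Clustering

variable {d : ℕ}

lemma capa_eq_sum (A : Finset (Pt d)) : capa d A = ∑ x ∈ A, esc d A x :=
  Finset.tsum_subtype' A (esc d A)

lemma esc_le_capa {A : Finset (Pt d)} {x : Pt d} (hx : x ∈ A) : esc d A x ≤ capa d A := by
  rw [capa_eq_sum]
  exact Finset.single_le_sum (fun y _ => esc_nonneg _ y) hx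

lemma setDist_le {A B : Finset (Pt d)} {x y : Pt d} (hx : x ∈ A) (hy : y ∈ B) :
    setDist d A B ≤ dist0 d x y :=
  csInf_le ⟨0, by rintro _ ⟨a, _, b, _, rfl⟩; exact Real.sqrt_nonneg _⟩ ⟨x, hx, y, hy, rfl⟩

lemma one_le_dist0 {x y : Pt d} (h : x ≠ y) : 1 ≤ dist0 d x y := by
  obtain ⟨i, hi⟩ := Function.ne_iff.1 (sub_ne_zero.2 h)
  rw [dist0_eq_sqrt_sqNorm, Real.one_le_sqrt]
  calc (1 : ℝ) ≤ ((x - y) i : ℝ) ^ 2 := by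
        exact_mod_cast Int.add_one_le_iff.2 (sq_pos_of_ne_zero hi)
    _ ≤ sqNorm (x - y) := sq_coord_le_sqNorm _ i

lemma mem_others {k : ℕ} {C : Fin k → Finset (Pt d)} {i : Fin k} {y : Pt d} :
    y ∈ others d C i ↔ ∃ j ≠ i, y ∈ C j := by
  simp only [others, Finset.mem_biUnion, Finset.mem_univ, true_and]
  refine exists_congr fun j => ?_
  by_cases h : j = i <;> simp [h]

lemma sep_le_dist0 {k : ℕ} {C : Fin k → Finset (Pt d)} {i : Fin k} {x y : Pt d} (hx : x ∈ C i)
    (hy : y ∈ others d C i) : sep d C ≤ dist0 d x y :=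
  (ciInf_le (Set.finite_range _).bddBelow i).trans (setDist_le hx hy)

lemma one_le_sep {k : ℕ} (hk : 2 ≤ k) {C : Fin k → Finset (Pt d)} (hne : ∀ i, (C i).Nonempty)
    (hdisj : ∀ i j, i ≠ j → Disjoint (C i) (C j)) : 1 ≤ sep d C := by
  have : Nontrivial (Fin k) := Fin.nontrivial_iff_two_le.2 hk
  refine le_ciInf fun i => le_csInf ?_ ?_
  · obtain ⟨x, hx⟩ := hne i
    obtain ⟨j, hj⟩ := exists_ne i
    obtain ⟨y, hy⟩ := hne j
    exact ⟨_, x, hx, y, mem_others.2 ⟨j, hj, hy⟩, rfl⟩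
  · rintro _ ⟨x, hx, y, hy, rfl⟩
    obtain ⟨j, hj, hy⟩ := mem_others.1 hy
    exact one_le_dist0 (Finset.disjoint_left.1 (hdisj i j hj.symm) hx <| · ▸ hy)

lemma confOf_eq_union_others (C : ClusteringS d) (i : Fin C.1) :
    confOf d C = C.2 i ∪ others d C.2 i := by
  ext y
  simp only [confOf, Finset.mem_biUnion, Finset.mem_univ, true_and, Finset.mem_union, mem_others]
  grind

lemma capa_confOf_le_capS {C : ClusteringS d}
    (hdisj : ∀ i j, i ≠ j → Disjoint (C.2 i) (C.2 j)) : capa d (confOf d C) ≤ capS d C := by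
  simp only [capS, capa_eq_sum]
  calc ∑ x ∈ confOf d C, esc d (confOf d C) x = ∑ i, ∑ x ∈ C.2 i, esc d (confOf d C) x :=
        Finset.sum_biUnion fun i _ j _ => hdisj i j
    _ ≤ _ := Finset.sum_le_sum fun i _ => Finset.sum_le_sum fun x hx =>
        esc_anti (Finset.coe_subset.2 (Finset.subset_biUnion_of_mem C.2 (Finset.mem_univ i))) hx

lemma esc_div_capS_le_harm {C : ClusteringS d}
    (hdisj : ∀ i j, i ≠ j → Disjoint (C.2 i) (C.2 j)) {x : Pt d} (hx : x ∈ confOf d C) :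
    esc d (confOf d C) x / capS d C ≤ harm d (confOf d C) x := by
  rcases (esc_nonneg (confOf d C : Set (Pt d)) x).eq_or_lt with h0 | hpos
  · simp [harm, ← h0]
  · exact div_le_div_of_nonneg_left hpos.le (hpos.trans_le (esc_le_capa hx))
      (capa_confOf_le_capS hdisj)

theorem exists_mul_esc_cluster_le (hd : 3 ≤ d) (N : ℕ) :
    ∃ c > 0, ∀ C : ClusteringS d, 0 < sep d C.2 → (∀ i, (C.2 i).card ≤ N) →
      ∀ i, ∀ x ∈ C.2 i,
        (1 - c * (confOf d C).card * sep d C.2 ^ ((2 : ℝ) - d)) * esc d (C.2 i) x ≤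
          esc d (confOf d C) x := by
  obtain ⟨M, hM, hfar⟩ := exists_esc_sub_le hd
  obtain ⟨δ, hδ, hlower⟩ := exists_pos_le_esc_of_card_le hd N
  refine ⟨M / δ, by positivity, fun C hsep hcard i x hx => ?_⟩
  rcases (esc_nonneg (C.2 i : Set (Pt d)) x).eq_or_lt with h0 | hpos
  · rw [← h0, mul_zero]
    exact esc_nonneg _ x
  have hδesc := hlower (C.2 i) (hcard i) x hpos
  have hunion := confOf_eq_union_others C i
  have hcost : M * (others d C.2 i).card * sep d C.2 ^ ((2 : ℝ) - d) ≤
      M / δ * (confOf d C).card * sep d C.2 ^ ((2 : ℝ) - d) * esc d (C.2 i) x := calc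
    _ ≤ M * (confOf d C).card * sep d C.2 ^ ((2 : ℝ) - d) := by
      gcongr
      exact hunion ▸ Finset.subset_union_right
    _ = M / δ * (confOf d C).card * sep d C.2 ^ ((2 : ℝ) - d) * δ := by field_simp
    _ ≤ _ := by gcongr
  have := hfar (C.2 i) (others d C.2 i) x _ hsep fun y hy => sep_le_dist0 hx hy
  rw [← Finset.coe_union, ← hunion] at this
  linarith

end Clustering

theorem activation_comparison_general (d N : ℕ) (hd : 3 ≤ d) :
    ∃ c : ℝ, 0 < c ∧
      ∀ (n : ℕ) (C : ClusteringS d), IsClusteringConf d n C → 2 ≤ C.1 →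
        (∀ i, (C.2 i).card ≤ N) →
        ∀ (i : Fin C.1) (x : Pt d), x ∈ C.2 i →
          (1 - c * (n : ℝ) * sep d C.2 ^ ((2 : ℝ) - (d : ℝ))) * harmS d C i x ≤
            harm d (↑(confOf d C)) x := by
  obtain ⟨c, hc, hesc⟩ := exists_mul_esc_cluster_le hd N
  refine ⟨c, hc, ?_⟩
  rintro _ C ⟨hne, hdisj, rfl⟩ hk hcard i x hx
  have hsep : 0 < sep d C.2 := one_pos.trans_le (one_le_sep hk hne hdisj)
  have hxU : x ∈ confOf d C := Finset.mem_biUnion.2 ⟨i, Finset.mem_univ i, hx⟩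
  have hcapS : 0 ≤ capS d C := Finset.sum_nonneg fun j _ => by
    rw [capa_eq_sum]
    exact Finset.sum_nonneg fun y _ => esc_nonneg _ y
  rw [harmS, ← mul_div_assoc]
  exact (div_le_div_of_nonneg_right (hesc C hsep hcard i x hx) hcapS).trans
    (esc_div_capS_le_harm hdisj hxU)

/-- **Activation comparison.** For `d ≥ 5` there is `c = c(d) > 0` such that for any
clustering `C` (with at least two clusters, each with at most 3 elements) of an
`n`-element configuration in `ℤ^d` and any `x` in cluster `i`,
`H_{π(C)}(x) ≥ (1 − c n sep(C)^{2−d}) H_C(i,x)`. -/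
theorem activation_comparison (d : ℕ) (hd : 5 ≤ d) :
    ∃ c : ℝ, 0 < c ∧
      ∀ (n : ℕ) (C : ClusteringS d), IsClusteringConf d n C → 2 ≤ C.1 →
        (∀ i, (C.2 i).card ≤ 3) →
        ∀ (i : Fin C.1) (x : Pt d), x ∈ C.2 i →
          (1 - c * (n : ℝ) * sep d C.2 ^ ((2 : ℝ) - (d : ℝ))) * harmS d C i x ≤
            harm d (↑(confOf d C)) x :=
  activation_comparison_general d 3 (by omega)

end HATFormal
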